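/- Let P be a PMF on a finite set X, let M be a positive integer, let f : X → {1,…,M}, let L(x) = |{x' ∈ X : f(x') = f(x)}|, and let ρ > 0 with ρ̃ = 1/(1+ρ). Define the PMF Q on X by Q(x) = L(x)^{−(1+ρ)} / Σ_{x'} L(x')^{−(1+ρ)}, and let M' = |{f(x) : x ∈ X}| be the number of labels actually used. If X is distributed according to P, then E[L(X)^ρ] = 2^{ρ·[H_{ρ̃}(P) + Δ_{ρ̃}(P‖Q) − log₂ M']}. -/

import Mathlib

open Real

/-- `P` is a probability mass function on the finite type `X`. -/
def IsPMF {X : Type*} [Fintype X] (P : X → ℝ) : Prop :=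
  (∀ x, 0 ≤ P x) ∧ ∑ x, P x = 1

/-- Rényi entropy of order `α` (base-2 logarithm). -/
noncomputable def renyiEntropy {X : Type*} [Fintype X] (α : ℝ) (P : X → ℝ) : ℝ :=
  (1 - α)⁻¹ * Real.logb 2 (∑ x, P x ^ α)

/-- Relative `α`-entropy `Δ_α(P‖Q)` (base-2 logarithm). -/
noncomputable def relAlphaEntropy {X : Type*} [Fintype X] (α : ℝ) (P Q : X → ℝ) : ℝ :=
  (α / (1 - α)) * Real.logb 2 (∑ x, P x * Q x ^ (α - 1))
    + Real.logb 2 (∑ x, Q x ^ α)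
    - (1 - α)⁻¹ * Real.logb 2 (∑ x, P x ^ α)

/-- The list size of `x` under encoder `f`. -/
noncomputable def listSize {X : Type*} [Fintype X] {M : ℕ} (f : X → Fin M) (x : X) : ℕ :=
  (Finset.univ.filter (fun x' => f x' = f x)).card

/-!
The Rényi entropy cancels the last term of `Δ_α(P‖Q)`, and `Δ_α(P‖Q)` does not change when `Q` is
multiplied by a positive constant, so `Q` may be replaced by `L^(-(1 + ρ))`. For `α = 1 / (1 + ρ)`
this weight satisfies `Q ^ (α - 1) = L ^ ρ` and `Q ^ α = L⁻¹`, which turns `ρ * (H_α(P) + Δ_α(P‖Q))`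
into `log₂ E[L ^ ρ] + ρ * log₂ (∑ L⁻¹)`. Finally `∑ L⁻¹` is the number of labels in use, since each
nonempty fiber of `f` contributes exactly one.
-/

theorem sum_inv_card_fiber {ι κ K : Type*} [DecidableEq κ] [DivisionRing K] [CharZero K]
    (s : Finset ι) (f : ι → κ) :
    ∑ i ∈ s, ((s.filter (fun j => f j = f i)).card : K)⁻¹ = (s.image f).card := by
  rw [Finset.sum_comp (fun k => ((s.filter (fun j => f j = k)).card : K)⁻¹) f, Finset.cast_card]
  refine Finset.sum_congr rfl fun k hk => ?_
  have card_fiber_ne_zero : (s.filter (fun j => f j = k)).card ≠ 0 :=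
    (Finset.fiber_card_ne_zero_iff_mem_image s f k).2 hk
  rw [nsmul_eq_mul, mul_inv_cancel₀ (Nat.cast_ne_zero.2 card_fiber_ne_zero)]

section

variable {X : Type*} [Fintype X] {P : X → ℝ}

theorem IsPMF.nonempty (hP : IsPMF P) : Nonempty X :=
  Finset.univ_nonempty_iff.1 <| Finset.nonempty_of_sum_ne_zero <| hP.2.trans_ne one_ne_zero

theorem IsPMF.sum_mul_pos (hP : IsPMF P) {g : X → ℝ} (hg : ∀ x, 0 < g x) :
    0 < ∑ x, P x * g x := by
  obtain ⟨x, hx, hPx⟩ := Finset.exists_ne_zero_of_sum_ne_zero (hP.2.trans_ne one_ne_zero)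
  exact Finset.sum_pos' (fun y _ => mul_nonneg (hP.1 y) (hg y).le)
    ⟨x, hx, mul_pos ((hP.1 x).lt_of_ne' hPx) (hg x)⟩

theorem renyiEntropy_add_relAlphaEntropy (α : ℝ) (P Q : X → ℝ) :
    renyiEntropy α P + relAlphaEntropy α P Q =
      α / (1 - α) * logb 2 (∑ x, P x * Q x ^ (α - 1)) + logb 2 (∑ x, Q x ^ α) := by
  rw [renyiEntropy, relAlphaEntropy]
  ring

theorem relAlphaEntropy_div_const {α c : ℝ} {Q : X → ℝ} (hα : α ≠ 1) (hc : 0 < c)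
    (hQ : ∀ x, 0 ≤ Q x) (hPQ : ∑ x, P x * Q x ^ (α - 1) ≠ 0) (hQα : ∑ x, Q x ^ α ≠ 0) :
    relAlphaEntropy α P (fun x => Q x / c) = relAlphaEntropy α P Q := by
  have cross_sum : ∑ x, P x * (Q x / c) ^ (α - 1) = (∑ x, P x * Q x ^ (α - 1)) / c ^ (α - 1) := by
    simp only [div_rpow (hQ _) hc.le, mul_div_assoc, Finset.sum_div]
  have power_sum : ∑ x, (Q x / c) ^ α = (∑ x, Q x ^ α) / c ^ α := by
    simp only [div_rpow (hQ _) hc.le, Finset.sum_div]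
  have one_sub_ne_zero : 1 - α ≠ 0 := sub_ne_zero.2 hα.symm
  rw [relAlphaEntropy, cross_sum, power_sum, logb_div hPQ (rpow_pos_of_pos hc _).ne',
    logb_div hQα (rpow_pos_of_pos hc _).ne', logb_rpow_eq_mul_logb_of_pos hc,
    logb_rpow_eq_mul_logb_of_pos hc, relAlphaEntropy]
  field_simp
  ring

section WeightPower

variable {L : X → ℝ} {ρ : ℝ}

theorem sum_mul_rpow_rpow_one_div_sub_one (hL : ∀ x, 0 ≤ L x) (hρ : 1 + ρ ≠ 0) :
    ∑ x, P x * (L x ^ (-(1 + ρ))) ^ (1 / (1 + ρ) - 1) = ∑ x, P x * L x ^ ρ := by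
  have exponent : -(1 + ρ) * (1 / (1 + ρ) - 1) = ρ := by field_simp; ring
  simp only [← rpow_mul (hL _), exponent]

theorem sum_rpow_rpow_one_div (hL : ∀ x, 0 ≤ L x) (hρ : 1 + ρ ≠ 0) :
    ∑ x, (L x ^ (-(1 + ρ))) ^ (1 / (1 + ρ)) = ∑ x, (L x)⁻¹ := by
  have exponent : -(1 + ρ) * (1 / (1 + ρ)) = -1 := by field_simp
  simp only [← rpow_mul (hL _), exponent, rpow_neg_one]

theorem renyiEntropy_add_relAlphaEntropy_rpow (hL : ∀ x, 0 ≤ L x) (hρ₀ : ρ ≠ 0)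
    (hρ₁ : 1 + ρ ≠ 0) :
    renyiEntropy (1 / (1 + ρ)) P + relAlphaEntropy (1 / (1 + ρ)) P (fun x => L x ^ (-(1 + ρ))) =
      ρ⁻¹ * logb 2 (∑ x, P x * L x ^ ρ) + logb 2 (∑ x, (L x)⁻¹) := by
  have one_sub_order : 1 - 1 / (1 + ρ) = ρ / (1 + ρ) := by field_simp; ring
  have coefficient : 1 / (1 + ρ) / (1 - 1 / (1 + ρ)) = ρ⁻¹ := by
    rw [one_sub_order]
    field_simp
  rw [renyiEntropy_add_relAlphaEntropy, sum_mul_rpow_rpow_one_div_sub_one hL hρ₁,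
    sum_rpow_rpow_one_div hL hρ₁, coefficient]

theorem sum_mul_rpow_eq_two_rpow {c : ℝ} (hL : ∀ x, 0 < L x) (hρ₀ : ρ ≠ 0) (hρ₁ : 1 + ρ ≠ 0)
    (hc : 0 < c) (hE : 0 < ∑ x, P x * L x ^ ρ) :
    ∑ x, P x * L x ^ ρ =
      (2 : ℝ) ^ (ρ * (renyiEntropy (1 / (1 + ρ)) P
        + relAlphaEntropy (1 / (1 + ρ)) P (fun x => L x ^ (-(1 + ρ)) / c)
        - logb 2 (∑ x, (L x)⁻¹))) := by
  have hL₀ : ∀ x, 0 ≤ L x := fun x => (hL x).le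
  have order_ne_one : 1 / (1 + ρ) ≠ 1 := by simpa [div_eq_iff hρ₁] using hρ₀
  have sum_inv_pos : 0 < ∑ x, (L x)⁻¹ :=
    Finset.sum_pos (fun x _ => inv_pos.2 (hL x)) (Finset.nonempty_of_sum_ne_zero hE.ne')
  have remove_normalization :
      relAlphaEntropy (1 / (1 + ρ)) P (fun x => L x ^ (-(1 + ρ)) / c) =
        relAlphaEntropy (1 / (1 + ρ)) P (fun x => L x ^ (-(1 + ρ))) := by
    refine relAlphaEntropy_div_const order_ne_one hc (fun x => rpow_nonneg (hL₀ x) _) ?_ ?_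
    · rw [sum_mul_rpow_rpow_one_div_sub_one hL₀ hρ₁]
      exact hE.ne'
    · rw [sum_rpow_rpow_one_div hL₀ hρ₁]
      exact sum_inv_pos.ne'
  rw [remove_normalization, renyiEntropy_add_relAlphaEntropy_rpow hL₀ hρ₀ hρ₁,
    add_sub_cancel_right, mul_inv_cancel_left₀ hρ₀, rpow_logb two_pos (by norm_num) hE]

end WeightPower

end

theorem rho_moment_listSize_eq_general {X Y : Type*} [Fintype X] [DecidableEq Y] (f : X → Y)
    (P : X → ℝ) (hP : IsPMF P) (ρ : ℝ) (hρ₀ : ρ ≠ 0) (hρ₁ : -1 < ρ)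
    (L : X → ℝ) (hL : ∀ x, L x = (Finset.univ.filter (fun x' => f x' = f x)).card)
    (Q : X → ℝ) (hQ : ∀ x, Q x = L x ^ (-(1 + ρ)) / ∑ x', L x' ^ (-(1 + ρ))) :
    ∑ x, P x * L x ^ ρ =
      (2 : ℝ) ^ (ρ * (renyiEntropy (1 / (1 + ρ)) P + relAlphaEntropy (1 / (1 + ρ)) P Q
        - logb 2 ((Finset.univ.image f).card : ℝ))) := by
  have := hP.nonempty
  have L_pos (x : X) : 0 < L x :=
    hL x ▸ Nat.cast_pos.2 (Finset.card_pos.2 ⟨x, Finset.mem_filter_univ x |>.2 rfl⟩)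
  have normalizer_pos : 0 < ∑ x, L x ^ (-(1 + ρ)) :=
    Finset.sum_pos (fun x _ => rpow_pos_of_pos (L_pos x) _) Finset.univ_nonempty
  have moment_pos : 0 < ∑ x, P x * L x ^ ρ := hP.sum_mul_pos fun x => rpow_pos_of_pos (L_pos x) ρ
  have sum_inv : ∑ x, (L x)⁻¹ = ((Finset.univ.image f).card : ℝ) := by
    simp only [hL, sum_inv_card_fiber]
  rw [funext hQ, ← sum_inv]
  exact sum_mul_rpow_eq_two_rpow L_pos hρ₀ (by linarith) normalizer_pos moment_pos

/-- Lemma 1: with `Q(x) = L(x)^{-(1+ρ)} / Σ_{x'} L(x')^{-(1+ρ)}` and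
`M'` the number of labels actually used,
`E[L(X)^ρ] = 2^{ρ·[H_{ρ̃}(P) + Δ_{ρ̃}(P‖Q) − log₂ M']}` where `ρ̃ = 1/(1+ρ)`. -/
theorem rho_moment_listSize_eq
    {X : Type*} [Fintype X] {M : ℕ} (hM : 0 < M) (f : X → Fin M)
    (P : X → ℝ) (hP : IsPMF P) (ρ : ℝ) (hρ : 0 < ρ)
    (Q : X → ℝ)
    (hQ : ∀ x, Q x = (listSize f x : ℝ) ^ (-(1 + ρ)) /
      ∑ x', (listSize f x' : ℝ) ^ (-(1 + ρ))) :
    ∑ x, P x * (listSize f x : ℝ) ^ ρ =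
      (2 : ℝ) ^ (ρ * (renyiEntropy (1 / (1 + ρ)) P + relAlphaEntropy (1 / (1 + ρ)) P Q
        - Real.logb 2 ((Finset.univ.image f).card : ℝ))) :=
  rho_moment_listSize_eq_general f P hP ρ hρ.ne' (by linarith)
    (fun x => listSize f x) (fun _ => rfl) Q hQ
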